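/- For every prime power q there exist constants C₁, C₂ > 0, depending only on q, such that for every integer g ≥ 0 there is an N with the following property: for all n ≥ N and every regular elliptic element c ∈ GL_n(𝔽_q), the number of pairs (u,v) ∈ GL_n(𝔽_q)² with u·v = c and dim ker(u−1) + dim ker(v−1) = n − g (i.e., the number of genus-g factorizations of c into two factors) lies between C₁ · q^{(n+g)²/2}/|GL_g(𝔽_q)| and C₂ · q^{(n+g)²/2}/|GL_g(𝔽_q)|, where |GL_0(𝔽_q)| = 1. -/

import Mathlib

/-- The dimension of the fixed space `ker(u - 1)` of `u ∈ GL_n(F)`. -/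
noncomputable def fixedDim {F : Type} [Field F] {n : ℕ} (u : GL (Fin n) F) : ℕ :=
  Module.finrank F (LinearMap.ker (Matrix.toLin' ((u : Matrix (Fin n) (Fin n) F) - 1)))

/-!
If `c = u * v`, then `ker (v - 1) = ker (u - c)`, so one counts the automorphisms `u` for which
`dim ker (u - 1) = a` and `dim ker (u - c) = b` are prescribed, where `a + b + g = n`. Count in two
ways the pairs of such a `u` with bases `x` of `ker (u - 1)` and `y` of `ker (u - c)`. Up to
constant factors, a given `u` has `q ^ (a ^ 2 + b ^ 2)` such bases, and there are
`q ^ (n * (a + b))` tuples `(x, y)`. As `c` fixes no nonzero vector, `(x, y)` is independent, so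
`u` is determined by its values on `g` further vectors, which leaves at most `q ^ (n * g)` choices;
when `a, b ≥ 2`, for a positive proportion of the tuples `(x, y)` a positive proportion of these
choices defines a valid `u`. Hence there are about `q ^ (n ^ 2 - a ^ 2 - b ^ 2)` automorphisms `u`.
The exponent equals `(n + g) ^ 2 / 2 - g ^ 2 - (a - b) ^ 2 / 2`, where `q ^ g ^ 2` is the order of
`GL g` up to a constant, and the sum over `a + b = n - g` is dominated by the terms with `a` close
to `b`.
-/

namespace GenusFactorization

open Module Submodule
open Finset.HasAntidiagonal (antidiagonal mem_antidiagonal)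

section Counting

variable {α β : Type*} [Finite α] [Finite β]

lemma ncard_mul_le_ncard_mul (r : α → β → Prop) {s : Set α} {t : Set β} {m n : ℝ}
    (hm : ∀ a ∈ s, m ≤ {b ∈ t | r a b}.ncard) (hn : ∀ b ∈ t, {a ∈ s | r a b}.ncard ≤ n) :
    s.ncard * m ≤ t.ncard * n := by
  classical
  lift s to Finset α using s.toFinite
  lift t to Finset β using t.toFinite
  simp only [Finset.mem_coe, ← Finset.coe_filter, Set.ncard_coe_finset] at hm hn ⊢
  simpa only [nsmul_eq_mul] using Finset.card_nsmul_le_card_nsmul r hm hn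

lemma ncard_mul_le_ncard_of_le_fiber {f : β → α} {s : Set α} {t : Set β} {m : ℝ}
    (h : ∀ a ∈ s, m ≤ {b ∈ t | f b = a}.ncard) : s.ncard * m ≤ t.ncard := by
  have hfib (b : β) : {a ∈ s | f b = a}.ncard ≤ 1 :=
    (Set.ncard_le_one (Set.toFinite _)).2 fun a ha a' ha' => ha.2.symm.trans ha'.2
  simpa only [mul_one] using
    ncard_mul_le_ncard_mul (fun a b => f b = a) h fun b _ => Nat.cast_le_one.2 (hfib b)

lemma ncard_eq_sum_ncard_fiber {ι : Type*} {f : α → ι} {s : Set α} {t : Finset ι}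
    (h : Set.MapsTo f s t) : s.ncard = ∑ i ∈ t, {a ∈ s | f a = i}.ncard := by
  classical
  lift s to Finset α using s.toFinite
  simp only [Finset.mem_coe, ← Finset.coe_filter, Set.ncard_coe_finset]
  exact Finset.card_eq_sum_card_fiberwise h

lemma quarter_add_le_prod_one_sub_half_pow (k : ℕ) :
    1 / 4 + (1 / 2 : ℝ) ^ (k + 2) ≤ ∏ i ∈ Finset.range (k + 1), (1 - (1 / 2 : ℝ) ^ (i + 1)) := by
  induction k with
  | zero => norm_num
  | succ k ih =>
    have hpos : (0 : ℝ) < (1 / 2) ^ k := by positivity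
    have hle : (1 / 2 : ℝ) ^ k ≤ 1 := pow_le_one₀ (by norm_num) (by norm_num)
    rw [Finset.prod_range_succ]
    refine le_trans ?_ (mul_le_mul_of_nonneg_right ih ?_) <;> simp only [pow_succ] <;> nlinarith

lemma quarter_le_prod_one_sub_half_pow (k : ℕ) :
    1 / 4 ≤ ∏ i ∈ Finset.range k, (1 - (1 / 2 : ℝ) ^ (k - i)) := by
  have hreflect : ∏ i ∈ Finset.range k, (1 - (1 / 2 : ℝ) ^ (k - i)) =
      ∏ i ∈ Finset.range k, (1 - (1 / 2 : ℝ) ^ (i + 1)) := by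
    rw [← Finset.prod_range_reflect]
    refine Finset.prod_congr rfl fun i hi => ?_
    rw [show k - (k - 1 - i) = i + 1 by have := Finset.mem_range.1 hi; omega]
  rw [hreflect]
  cases k with
  | zero => norm_num
  | succ k =>
    have := quarter_add_le_prod_one_sub_half_pow k
    have : (0 : ℝ) < (1 / 2) ^ (k + 2) := by positivity
    linarith

lemma ncard_mul_le_ncard_of_le_snoc {k : ℕ} {s : Set (Fin k → α)} {t : Set (Fin (k + 1) → α)}
    {m : ℝ} (h : ∀ x ∈ s, m ≤ {v | (Fin.snoc x v : Fin (k + 1) → α) ∈ t}.ncard) :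
    s.ncard * m ≤ t.ncard := by
  refine ncard_mul_le_ncard_of_le_fiber
    (f := fun y : Fin (k + 1) → α => (Fin.init y : Fin k → α)) fun x hx => (h x hx).trans ?_
  refine Nat.cast_le.2 (Set.ncard_le_ncard_of_injOn (fun v => (Fin.snoc x v : Fin (k + 1) → α))
    (fun v hv => ⟨hv, Fin.init_snoc _ _⟩) (fun v _ w _ hvw => ?_))
  simpa using congrFun hvw (Fin.last k)

-- The `k`-th entry may fail to extend the tuple for a proportion `2 ^ -(K - k)` of its values, so
-- these losses multiply to a constant independent of `K`.
lemma card_pow_mul_le_ncard_of_snoc (S : ∀ k, Set (Fin k → α)) (K m : ℕ) (h0 : (S 0).Nonempty)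
    (hS : ∀ k < K, ∀ s ∈ S k, Nat.card α * (1 - (1 / 2 : ℝ) ^ (K - k)) ^ m ≤
      {v | (Fin.snoc s v : Fin (k + 1) → α) ∈ S (k + 1)}.ncard) :
    (Nat.card α : ℝ) ^ K * (1 / 4) ^ m ≤ (S K).ncard := by
  have hfac (k : ℕ) : (0 : ℝ) ≤ 1 - (1 / 2) ^ (K - k) :=
    sub_nonneg.2 (pow_le_one₀ (by norm_num) (by norm_num))
  have hprefix : ∀ k ≤ K, (Nat.card α : ℝ) ^ k *
      (∏ i ∈ Finset.range k, (1 - (1 / 2 : ℝ) ^ (K - i))) ^ m ≤ (S k).ncard := by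
    intro k hk
    induction k with
    | zero => simpa using Nat.one_le_iff_ne_zero.2 (Set.ncard_ne_zero_of_mem h0.some_mem)
    | succ k ih =>
      rw [Finset.prod_range_succ, mul_pow, pow_succ, mul_mul_mul_comm]
      refine (mul_le_mul_of_nonneg_right (ih (by omega)) ?_).trans
        (ncard_mul_le_ncard_of_le_snoc (hS k hk))
      exact mul_nonneg (Nat.cast_nonneg _) (pow_nonneg (hfac k) m)
  refine le_trans ?_ (hprefix K le_rfl)
  gcongr
  exact quarter_le_prod_one_sub_half_pow K

lemma card_mul_one_sub_sq_le_ncard_compl_union_union {A B D : Set α} {t : ℝ} (ht₀ : 0 ≤ t)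
    (ht : t ≤ 1 / 2) (hA : A.ncard ≤ Nat.card α * t) (hB : B.ncard ≤ Nat.card α * t / 4)
    (hD : D.ncard ≤ Nat.card α * t / 4) :
    Nat.card α * (1 - t) ^ 2 ≤ ((A ∪ B ∪ D)ᶜ.ncard : ℝ) := by
  have hunion : ((A ∪ B ∪ D).ncard : ℝ) ≤ A.ncard + B.ncard + D.ncard := by
    exact_mod_cast (Set.ncard_union_le _ _).trans
      (Nat.add_le_add_right (Set.ncard_union_le _ _) _)
  have hcompl : ((A ∪ B ∪ D).ncard + (A ∪ B ∪ D)ᶜ.ncard : ℝ) = Nat.card α := by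
    exact_mod_cast Set.ncard_add_ncard_compl (A ∪ B ∪ D)
  have hslack : 0 ≤ Nat.card α * (t * (1 / 2 - t)) := by
    have := sub_nonneg.2 ht
    positivity
  linarith

end Counting

section AvoidingSubgroups

variable {G : Type*} [AddCommGroup G] [Finite G]

lemma card_mul_card_le_card_mul_card_inf (H K : AddSubgroup G) :
    Nat.card H * Nat.card K ≤ Nat.card G * Nat.card (H ⊓ K : AddSubgroup G) := by
  have hindex : 0 < H.index * K.index :=
    Nat.mul_pos (Nat.pos_of_ne_zero H.index_ne_zero_of_finite)
      (Nat.pos_of_ne_zero K.index_ne_zero_of_finite)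
  refine Nat.le_of_mul_le_mul_right (c := H.index * K.index) ?_ hindex
  calc Nat.card H * Nat.card K * (H.index * K.index)
      = Nat.card G * Nat.card G := by
        rw [mul_mul_mul_comm, H.card_mul_index, K.card_mul_index]
    _ = Nat.card G * (Nat.card (H ⊓ K : AddSubgroup G) * (H ⊓ K).index) := by
        rw [AddSubgroup.card_mul_index]
    _ ≤ Nat.card G * Nat.card (H ⊓ K : AddSubgroup G) * (H.index * K.index) := by
        rw [mul_assoc]
        gcongr
        exact AddSubgroup.index_inf_le

-- Membership in two subgroups is positively correlated, which beats the union bound `1 - 2 * t`;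
-- the latter is vacuous at `t = 1 / 2`.
lemma card_mul_one_sub_sq_le_ncard_compl_union (H K : AddSubgroup G) {t : ℝ} (ht : t ≤ 1)
    (hH : Nat.card H ≤ Nat.card G * t) (hK : Nat.card K ≤ Nat.card G * t) :
    Nat.card G * (1 - t) ^ 2 ≤ ((H ∪ K : Set G)ᶜ.ncard : ℝ) := by
  have hinf : (Nat.card H * Nat.card K : ℝ) ≤ Nat.card G * ((H ∩ K : Set G).ncard : ℝ) := by
    exact_mod_cast card_mul_card_le_card_mul_card_inf H K
  have hunion : ((H ∪ K : Set G).ncard + (H ∩ K : Set G).ncard : ℝ) =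
      Nat.card H + Nat.card K := by
    exact_mod_cast Set.ncard_union_add_ncard_inter (H : Set G) K
  have hcompl : ((H ∪ K : Set G).ncard + (H ∪ K : Set G)ᶜ.ncard : ℝ) = Nat.card G := by
    exact_mod_cast Set.ncard_add_ncard_compl (H ∪ K : Set G)
  have hG : (0 : ℝ) < Nat.card G := by exact_mod_cast Nat.card_pos
  refine le_of_mul_le_mul_left ?_ hG
  calc (Nat.card G : ℝ) * (Nat.card G * (1 - t) ^ 2)
      = (Nat.card G - Nat.card G * t) * (Nat.card G - Nat.card G * t) := by ring
    _ ≤ (Nat.card G - Nat.card H) * (Nat.card G - Nat.card K) := by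
        have : 0 ≤ (Nat.card G : ℝ) - Nat.card G * t := by nlinarith
        gcongr
        linarith
    _ ≤ Nat.card G * ((H ∪ K : Set G)ᶜ.ncard : ℝ) := by nlinarith

lemma ncard_setOf_sub_mem_le (s : Set G) (e : G) : {v | v - e ∈ s}.ncard ≤ s.ncard :=
  Set.ncard_le_ncard_of_injOn (· - e) (fun _ hv => hv) (sub_left_injective.injOn)

end AvoidingSubgroups

section IndependentTuples

variable {F V : Type*} [Field F] [AddCommGroup V] [Module F V]

lemma linearIndependent_mkQ_snoc_iff (P : Submodule F V) {k : ℕ} (s : Fin k → V) (v : V) :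
    LinearIndependent F (P.mkQ ∘ (Fin.snoc s v : Fin (k + 1) → V)) ↔
      LinearIndependent F (P.mkQ ∘ s) ∧ v ∉ P ⊔ span F (Set.range s) := by
  rw [Fin.comp_snoc, linearIndependent_finSnoc, Set.range_comp, span_image, ← mem_comap,
    comap_map_mkQ]

lemma linearIndependent_mkQ_snoc_sub_iff (P : Submodule F V) (e : ℕ → V) {k : ℕ} (s : Fin k → V)
    (v : V) :
    LinearIndependent F (fun i => P.mkQ ((Fin.snoc s v : Fin (k + 1) → V) i - e i)) ↔
      LinearIndependent F (fun i => P.mkQ (s i - e i)) ∧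
        v - e k ∉ P ⊔ span F (Set.range fun i => s i - e i) := by
  have hsnoc : (fun i => (Fin.snoc s v : Fin (k + 1) → V) i - e i) =
      Fin.snoc (fun i => s i - e i) (v - e k) := by
    funext i
    refine Fin.lastCases ?_ (fun j => ?_) i <;> simp
  have hiff := linearIndependent_mkQ_snoc_iff P (fun i => s i - e i) (v - e k)
  rwa [← hsnoc] at hiff

lemma finrank_span_range_fin_le {k : ℕ} (s : Fin k → V) :
    finrank F (span F (Set.range s)) ≤ k :=
  (finrank_range_le_card s).trans_eq (Fintype.card_fin k)

variable [Finite V]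

lemma finrank_sup_span_range_le (P : Submodule F V) {k : ℕ} (s : Fin k → V) :
    finrank F ↥(P ⊔ span F (Set.range s)) ≤ finrank F P + k :=
  (finrank_add_le_finrank_add_finrank _ _).trans
    (Nat.add_le_add_left (finrank_span_range_fin_le s) _)

variable [Finite F]

lemma two_le_natCard_field (K : Type*) [Field K] [Finite K] : (2 : ℝ) ≤ Nat.card K := by
  exact_mod_cast Finite.one_lt_card

lemma natCard_submodule_le {U : Submodule F V} {j : ℕ} (h : finrank F U + j ≤ finrank F V) :
    (Nat.card U : ℝ) ≤ Nat.card V * (1 / 2) ^ j := by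
  have hq := two_le_natCard_field F
  have hj : 1 ≤ (Nat.card F : ℝ) ^ j * (1 / 2) ^ j := by
    rw [← mul_pow]
    exact one_le_pow₀ (by linarith)
  rw [natCard_eq_pow_finrank (K := F) (V := U), natCard_eq_pow_finrank (K := F) (V := V)]
  push_cast
  calc (Nat.card F : ℝ) ^ finrank F U
      ≤ (Nat.card F : ℝ) ^ finrank F U * (Nat.card F ^ j * (1 / 2) ^ j) :=
        le_mul_of_one_le_right (by positivity) hj
    _ = (Nat.card F : ℝ) ^ (finrank F U + j) * (1 / 2) ^ j := by ring
    _ ≤ (Nat.card F : ℝ) ^ finrank F V * (1 / 2) ^ j := by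
        gcongr
        linarith

lemma natCard_sup_span_range_le {P : Submodule F V} {k l : ℕ} (s : Fin k → V) (hkl : k ≤ l)
    (h : finrank F P + l ≤ finrank F V) :
    (Nat.card ↥(P ⊔ span F (Set.range s)) : ℝ) ≤ Nat.card V * (1 / 2) ^ (l - k) :=
  natCard_submodule_le (by have := finrank_sup_span_range_le P s; omega)

lemma le_ncard_linearIndependent_mkQ_inter (P Q : Submodule F V) {a : ℕ}
    (hP : finrank F P + a ≤ finrank F V) (hQ : finrank F Q + a ≤ finrank F V) :
    (Nat.card V : ℝ) ^ a * (1 / 4) ^ 2 ≤ {x : Fin a → V |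
      LinearIndependent F (P.mkQ ∘ x) ∧ LinearIndependent F (Q.mkQ ∘ x)}.ncard := by
  refine card_pow_mul_le_ncard_of_snoc (fun k => {x : Fin k → V |
    LinearIndependent F (P.mkQ ∘ x) ∧ LinearIndependent F (Q.mkQ ∘ x)}) a 2
    ⟨0, linearIndependent_empty_type, linearIndependent_empty_type⟩ fun k hk s hs => ?_
  have havoid := card_mul_one_sub_sq_le_ncard_compl_union
    (P ⊔ span F (Set.range s)).toAddSubgroup (Q ⊔ span F (Set.range s)).toAddSubgroup
    (pow_le_one₀ (by norm_num) (by norm_num))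
    (natCard_sup_span_range_le s hk.le hP) (natCard_sup_span_range_le s hk.le hQ)
  refine havoid.trans (Nat.cast_le.2 (Set.ncard_le_ncard fun v hv => ?_))
  obtain ⟨hvP, hvQ⟩ := not_or.1 hv
  exact ⟨(linearIndependent_mkQ_snoc_iff P s v).2 ⟨hs.1, hvP⟩,
    (linearIndependent_mkQ_snoc_iff Q s v).2 ⟨hs.2, hvQ⟩⟩

lemma le_ncard_linearIndependent_mkQ_sub (P Q R : Submodule F V) (e e' : ℕ → V) {g : ℕ}
    (hP : finrank F P + g ≤ finrank F V) (hQ : finrank F Q + (g + 2) ≤ finrank F V)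
    (hR : finrank F R + (g + 2) ≤ finrank F V) :
    (Nat.card V : ℝ) ^ g * (1 / 4) ^ 2 ≤ {f : Fin g → V | LinearIndependent F (P.mkQ ∘ f) ∧
      LinearIndependent F (fun i => Q.mkQ (f i - e i)) ∧
      LinearIndependent F (fun i => R.mkQ (f i - e' i))}.ncard := by
  refine card_pow_mul_le_ncard_of_snoc (fun k => {f : Fin k → V | LinearIndependent F (P.mkQ ∘ f) ∧
      LinearIndependent F (fun i => Q.mkQ (f i - e i)) ∧
      LinearIndependent F (fun i => R.mkQ (f i - e' i))}) g 2
    ⟨0, linearIndependent_empty_type, linearIndependent_empty_type, linearIndependent_empty_type⟩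
    fun k hk s hs => ?_
  have hshift (U : Submodule F V) (v₀ : V)
      (hU : (Nat.card U : ℝ) ≤ Nat.card V * (1 / 2) ^ (g + 2 - k)) :
      ({v | v - v₀ ∈ U}.ncard : ℝ) ≤ Nat.card V * (1 / 2) ^ (g - k) / 4 := by
    rw [show g + 2 - k = g - k + 2 by omega, pow_add] at hU
    have : ({v | v - v₀ ∈ U}.ncard : ℝ) ≤ Nat.card U :=
      Nat.cast_le.2 (ncard_setOf_sub_mem_le (U : Set V) v₀)
    linarith
  have havoid := card_mul_one_sub_sq_le_ncard_compl_union_union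
    (A := (P ⊔ span F (Set.range s) : Submodule F V))
    (B := {v | v - e k ∈ Q ⊔ span F (Set.range fun i => s i - e i)})
    (D := {v | v - e' k ∈ R ⊔ span F (Set.range fun i => s i - e' i)})
    (by positivity) (pow_le_of_le_one (by norm_num) (by norm_num) (by omega))
    (natCard_sup_span_range_le s hk.le hP)
    (hshift _ _ (natCard_sup_span_range_le _ (by omega) hQ))
    (hshift _ _ (natCard_sup_span_range_le _ (by omega) hR))
  refine havoid.trans (Nat.cast_le.2 (Set.ncard_le_ncard fun v hv => ?_))
  obtain ⟨hvPQ, hvR⟩ := not_or.1 hv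
  obtain ⟨hvP, hvQ⟩ := not_or.1 hvPQ
  exact ⟨(linearIndependent_mkQ_snoc_iff P s v).2 ⟨hs.1, hvP⟩,
    (linearIndependent_mkQ_snoc_sub_iff Q e s v).2 ⟨hs.2.1, hvQ⟩,
    (linearIndependent_mkQ_snoc_sub_iff R e' s v).2 ⟨hs.2.2, hvR⟩⟩

end IndependentTuples

section Frames

variable {F V : Type*} [Field F] [AddCommGroup V] [Module F V]

/-- The ordered linearly independent `k`-tuples of vectors of `W`. Those of length `finrank F W` are
the bases of `W`; keeping them as tuples in `V` lets one tuple be tested against many subspaces. -/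
def frames (W : Submodule F V) (k : ℕ) : Set (Fin k → V) :=
  {s | LinearIndependent F s ∧ ∀ i, s i ∈ W}

lemma ncard_frames (W : Submodule F V) (k : ℕ) :
    (frames W k).ncard = {s : Fin k → W | LinearIndependent F s}.ncard := by
  have himage : frames W k = (W.subtype ∘ ·) '' {s : Fin k → W | LinearIndependent F s} := by
    ext s
    refine ⟨fun hs => ⟨fun i => ⟨s i, hs.2 i⟩, .of_comp W.subtype hs.1, rfl⟩, ?_⟩
    rintro ⟨s, hs, rfl⟩
    exact ⟨hs.map' W.subtype W.ker_subtype, fun i => (s i).2⟩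
  rw [himage, Set.ncard_image_of_injective _ W.injective_subtype.comp_left]

variable [Finite V]

lemma ncard_frames_le {W : Submodule F V} {k : ℕ} (hW : finrank F W = k) :
    (frames W k).ncard ≤ Nat.card F ^ k ^ 2 := by
  rw [ncard_frames]
  refine (Set.ncard_le_card _).trans_eq ?_
  rw [Nat.card_fun, natCard_eq_pow_finrank (K := F), hW, Nat.card_fin, ← pow_mul, pow_two]

variable [Finite F]

lemma le_ncard_linearIndependent {k : ℕ} (hk : k ≤ finrank F V) :
    (Nat.card V : ℝ) ^ k * (1 / 4) ^ 2 ≤ {s : Fin k → V | LinearIndependent F s}.ncard := by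
  have hbot : finrank F (⊥ : Submodule F V) + k ≤ finrank F V := by simpa using hk
  refine (le_ncard_linearIndependent_mkQ_inter ⊥ ⊥ hbot hbot).trans (Nat.cast_le.2 ?_)
  exact Set.ncard_le_ncard fun s hs => .of_comp _ hs.1

lemma le_ncard_frames {W : Submodule F V} {k : ℕ} (hW : finrank F W = k) :
    (Nat.card F : ℝ) ^ k ^ 2 * (1 / 4) ^ 2 ≤ (frames W k).ncard := by
  have hcount := le_ncard_linearIndependent (F := F) (V := W) hW.ge
  rwa [natCard_eq_pow_finrank (K := F), hW, Nat.cast_pow, ← pow_mul, ← pow_two,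
    ← ncard_frames] at hcount

lemma natCard_GL_eq_ncard (g : ℕ) :
    Nat.card (GL (Fin g) F) = {s : Fin g → Fin g → F | LinearIndependent F s}.ncard := by
  cases nonempty_fintype F
  exact Nat.card_congr (Matrix.equiv_GL_linearindependent g)

lemma natCard_GL_le (g : ℕ) : Nat.card (GL (Fin g) F) ≤ Nat.card F ^ g ^ 2 := by
  rw [natCard_GL_eq_ncard]
  refine (Set.ncard_le_card _).trans_eq ?_
  rw [Nat.card_fun, Nat.card_fun, Nat.card_fin, ← pow_mul, pow_two]

lemma le_natCard_GL (g : ℕ) :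
    (Nat.card F : ℝ) ^ g ^ 2 * (1 / 4) ^ 2 ≤ Nat.card (GL (Fin g) F) := by
  have hcount := le_ncard_linearIndependent (F := F) (V := Fin g → F) (k := g) (by simp)
  rwa [Nat.card_fun, Nat.card_fin, Nat.cast_pow, ← pow_mul, ← pow_two,
    ← natCard_GL_eq_ncard] at hcount

end Frames

section Bases

variable {F V : Type*} [Field F] [AddCommGroup V] [Module F V]

lemma linearIndependent_sumElim_of_mkQ_span {ι κ : Type*} {v : ι → V} {w : κ → V}
    (hv : LinearIndependent F v) (hw : LinearIndependent F ((span F (Set.range v)).mkQ ∘ w)) :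
    LinearIndependent F (Sum.elim v w) :=
  .sumElim_of_quotient (linearIndependent_span hv) w hw

variable [FiniteDimensional F V] {ι κ : Type*} [Fintype ι]

lemma exists_basis_sum_fin {z : ι → V} (hz : LinearIndependent F z) {g : ℕ}
    (hg : Fintype.card ι + g = finrank F V) :
    ∃ B : Basis (ι ⊕ Fin g) F V, ∀ i, B (Sum.inl i) = z i := by
  have hquot : finrank F (V ⧸ span F (Set.range z)) = g := by
    have := (span F (Set.range z)).finrank_quotient_add_finrank
    rw [finrank_span_eq_card hz] at this
    omega
  exact ⟨(Basis.span hz).sumQuot (finBasisOfFinrankEq F _ hquot),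
    fun i => by simp [Basis.span_apply]⟩

lemma isUnit_of_linearIndependent_comp {u : End F V} {t : ι → V}
    (hcard : Fintype.card ι = finrank F V) (h : LinearIndependent F (u ∘ t)) : IsUnit u := by
  rw [LinearMap.isUnit_iff_range_eq_top, eq_top_iff,
    ← h.span_eq_top_of_card_eq_finrank' hcard, span_le]
  rintro _ ⟨i, rfl⟩
  exact ⟨t i, rfl⟩

lemma finrank_ker_eq_card [Fintype κ] {w : End F V} {x : ι → V} {t : κ → V}
    (hx : LinearIndependent F x) (hwx : ∀ i, w (x i) = 0) (ht : LinearIndependent F (w ∘ t))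
    (hcard : Fintype.card ι + Fintype.card κ = finrank F V) :
    finrank F (LinearMap.ker w) = Fintype.card ι := by
  have hker : Fintype.card ι ≤ finrank F (LinearMap.ker w) := by
    rw [← finrank_span_eq_card hx]
    exact finrank_mono (span_le.2 (Set.range_subset_iff.2 hwx))
  have hrange : Fintype.card κ ≤ finrank F (LinearMap.range w) := by
    rw [← finrank_span_eq_card ht]
    exact finrank_mono (span_le.2 (Set.range_subset_iff.2 fun i => ⟨t i, rfl⟩))
  have := w.finrank_range_add_finrank_ker
  omega

lemma ncard_setOf_linearMap_eq_le {W : Type*} [AddCommGroup W] [Module F W] [Finite W]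
    {z : ι → V} (hz : LinearIndependent F z) (w : ι → W) {g : ℕ}
    (hg : Fintype.card ι + g = finrank F V) :
    {u : V →ₗ[F] W | ∀ i, u (z i) = w i}.ncard ≤ Nat.card W ^ g := by
  obtain ⟨B, hB⟩ := exists_basis_sum_fin hz hg
  have hpow : Nat.card W ^ g = (Set.univ : Set (Fin g → W)).ncard := by
    rw [Set.ncard_univ, Nat.card_fun, Nat.card_fin]
  rw [hpow]
  refine Set.ncard_le_ncard_of_injOn (fun u i => u (B (Sum.inr i))) (fun _ _ => Set.mem_univ _)
    fun u hu u' hu' heq => B.ext ?_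
  rintro (i | i)
  · rw [hB, hu i, hu' i]
  · exact congrFun heq i

end Bases

section LeftFactors

variable {F V : Type*} [Field F] [AddCommGroup V] [Module F V]

/-- The automorphisms `u` with `dim ker (u - 1) = a` and `dim ker (u - C) = b`. When `C = u * v`
they are the first factors of the factorizations with fixed space dimensions `a` and `b`, since
`ker (v - 1) = ker (u * (v - 1)) = ker (u - C)`. -/
def leftFactors (C : End F V) (a b : ℕ) : Set (End F V) :=
  {u | IsUnit u ∧ finrank F (LinearMap.ker (u - 1)) = a ∧ finrank F (LinearMap.ker (u - C)) = b}

/-- The pairs of independent tuples in `ker (u - 1)` and `ker (u - C)`; for `u ∈ leftFactors C a b`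
they are the pairs of bases of the two kernels. -/
def kernelFrames (C : End F V) (a b : ℕ) (u : End F V) : Set ((Fin a → V) × (Fin b → V)) :=
  frames (LinearMap.ker (u - 1)) a ×ˢ frames (LinearMap.ker (u - C)) b

/-- The pairs of tuples `(x, y)` such that both `(y, x)` and `(C y, x)` are independent, so that the
prescriptions `u x = x` and `u y = C y` are compatible with `u` being an automorphism. -/
def independentPairs (C : End F V) (a b : ℕ) : Set ((Fin a → V) × (Fin b → V)) :=
  {p | LinearIndependent F p.2 ∧ LinearIndependent F ((span F (Set.range p.2)).mkQ ∘ p.1) ∧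
    LinearIndependent F ((span F (Set.range (C ∘ p.2))).mkQ ∘ p.1)}

variable {C u : End F V} {a b g : ℕ}

lemma mem_kernelFrames_iff {x : Fin a → V} {y : Fin b → V} :
    (x, y) ∈ kernelFrames C a b u ↔
      (LinearIndependent F x ∧ ∀ i, u (x i) = x i) ∧
        LinearIndependent F y ∧ ∀ i, u (y i) = C (y i) := by
  simp [kernelFrames, frames, sub_eq_zero]

lemma linearIndependent_sumElim_of_mem_kernelFrames (hC : LinearMap.ker (C - 1) = ⊥)
    {p : (Fin a → V) × (Fin b → V)} (hp : p ∈ kernelFrames C a b u) :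
    LinearIndependent F (Sum.elim p.1 p.2) := by
  obtain ⟨⟨hx, hux⟩, hy, huy⟩ := hp
  have hker : Disjoint (LinearMap.ker (u - 1)) (LinearMap.ker (u - C)) := by
    rw [disjoint_def]
    intro v hv hvC
    have hfix : v ∈ LinearMap.ker (C - 1) := by
      simp only [LinearMap.mem_ker, LinearMap.sub_apply, sub_eq_zero] at hv hvC ⊢
      exact hvC.symm.trans hv
    rwa [hC, mem_bot] at hfix
  exact hx.sum_type hy (hker.mono (span_le.2 (Set.range_subset_iff.2 hux))
    (span_le.2 (Set.range_subset_iff.2 huy)))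

lemma mem_leftFactors_of_linearIndependent [FiniteDimensional F V] (hn : a + b + g = finrank F V)
    {x : Fin a → V} {y : Fin b → V} (e : Fin g → V) (hp : (x, y) ∈ kernelFrames C a b u)
    (hu : LinearIndependent F (u ∘ Sum.elim (Sum.elim y x) e))
    (hu1 : LinearIndependent F ((u - 1 : End F V) ∘ Sum.elim y e))
    (huC : LinearIndependent F ((u - C : End F V) ∘ Sum.elim x e)) : u ∈ leftFactors C a b := by
  obtain ⟨⟨hx, hux⟩, hy, huy⟩ := hp
  refine ⟨isUnit_of_linearIndependent_comp ?_ hu, ?_, ?_⟩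
  · simp only [Fintype.card_sum, Fintype.card_fin]
    omega
  · simpa using finrank_ker_eq_card hx hux hu1
      (by simp only [Fintype.card_sum, Fintype.card_fin]; omega)
  · simpa using finrank_ker_eq_card hy huy huC
      (by simp only [Fintype.card_sum, Fintype.card_fin]; omega)

lemma mem_leftFactors_of_linearIndependent_mkQ [FiniteDimensional F V]
    (hn : a + b + g = finrank F V) (hC1 : LinearMap.ker (C - 1) = ⊥)
    {x : Fin a → V} {y : Fin b → V} {e : Fin g → V} (hp : (x, y) ∈ kernelFrames C a b u)
    (hCyx : LinearIndependent F (Sum.elim (C ∘ y) x))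
    (hf : LinearIndependent F ((span F (Set.range (Sum.elim (C ∘ y) x))).mkQ ∘ u ∘ e))
    (hf1 : LinearIndependent F
      ((span F (Set.range ((C - 1 : End F V) ∘ y))).mkQ ∘ (u - 1 : End F V) ∘ e))
    (hfC : LinearIndependent F
      ((span F (Set.range ((1 - C : End F V) ∘ x))).mkQ ∘ (u - C : End F V) ∘ e)) :
    u ∈ leftFactors C a b := by
  obtain ⟨⟨hx, hux⟩, hy, huy⟩ := mem_kernelFrames_iff.1 hp
  have hC1' : LinearMap.ker (1 - C) = ⊥ := by
    rw [← neg_sub, LinearMap.ker_neg, hC1]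
  have hy1 : (u - 1 : End F V) ∘ y = (C - 1 : End F V) ∘ y := funext fun i => by simp [huy]
  have hxC : (u - C : End F V) ∘ x = (1 - C : End F V) ∘ x := funext fun i => by simp [hux]
  refine mem_leftFactors_of_linearIndependent hn e hp ?_ ?_ ?_
  · rw [Sum.comp_elim, Sum.comp_elim, show u ∘ y = C ∘ y from funext huy,
      show u ∘ x = x from funext hux]
    exact linearIndependent_sumElim_of_mkQ_span hCyx hf
  · rw [Sum.comp_elim, hy1]
    exact linearIndependent_sumElim_of_mkQ_span (hy.map' _ hC1) hf1
  · rw [Sum.comp_elim, hxC]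
    exact linearIndependent_sumElim_of_mkQ_span (hx.map' _ hC1') hfC

variable [Finite V]

lemma ncard_kernelFrames_le (hu : u ∈ leftFactors C a b) :
    (kernelFrames C a b u).ncard ≤ Nat.card F ^ (a ^ 2 + b ^ 2) := by
  rw [kernelFrames, Set.ncard_prod, pow_add]
  exact Nat.mul_le_mul (ncard_frames_le hu.2.1) (ncard_frames_le hu.2.2)

variable [Finite F]

lemma le_ncard_kernelFrames (hu : u ∈ leftFactors C a b) :
    (Nat.card F : ℝ) ^ (a ^ 2 + b ^ 2) * (1 / 4) ^ 4 ≤ (kernelFrames C a b u).ncard := by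
  obtain ⟨-, ha, hb⟩ := hu
  rw [kernelFrames, Set.ncard_prod, Nat.cast_mul]
  calc (Nat.card F : ℝ) ^ (a ^ 2 + b ^ 2) * (1 / 4) ^ 4
      = Nat.card F ^ a ^ 2 * (1 / 4) ^ 2 * (Nat.card F ^ b ^ 2 * (1 / 4) ^ 2) := by ring
    _ ≤ _ := by gcongr <;> exact le_ncard_frames ‹_›

theorem ncard_leftFactors_mul_le (hC : LinearMap.ker (C - 1) = ⊥) (hn : a + b + g = finrank F V) :
    (leftFactors C a b).ncard * ((Nat.card F : ℝ) ^ (a ^ 2 + b ^ 2) * (1 / 4) ^ 4) ≤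
      Nat.card F ^ finrank F V ^ 2 := by
  have : Finite (End F V) := DFunLike.finite _
  let T : Set ((Fin a → V) × (Fin b → V)) := {p | LinearIndependent F (Sum.elim p.1 p.2)}
  have hfactor : ∀ u ∈ leftFactors C a b, (Nat.card F : ℝ) ^ (a ^ 2 + b ^ 2) * (1 / 4) ^ 4 ≤
      {p ∈ T | p ∈ kernelFrames C a b u}.ncard := fun u hu =>
    (le_ncard_kernelFrames hu).trans (Nat.cast_le.2 (Set.ncard_le_ncard
      fun p hp => ⟨linearIndependent_sumElim_of_mem_kernelFrames hC hp, hp⟩))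
  have hpair : ∀ p ∈ T, ({u ∈ leftFactors C a b | p ∈ kernelFrames C a b u}.ncard : ℝ) ≤
      (Nat.card V ^ g : ℕ) := fun p hp => by
    refine Nat.cast_le.2 ((Set.ncard_le_ncard fun u hu => ?_).trans
      (ncard_setOf_linearMap_eq_le hp (Sum.elim p.1 (C ∘ p.2)) (by simpa using hn)))
    have hux := mem_kernelFrames_iff.1 hu.2
    rintro (i | i)
    · exact hux.1.2 i
    · exact hux.2.2 i
  have hT : T.ncard ≤ Nat.card V ^ a * Nat.card V ^ b := by
    refine (Set.ncard_le_card T).trans_eq ?_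
    rw [Nat.card_prod, Nat.card_fun, Nat.card_fun, Nat.card_fin, Nat.card_fin]
  have hV : Nat.card V ^ a * Nat.card V ^ b * Nat.card V ^ g = Nat.card F ^ finrank F V ^ 2 := by
    rw [← pow_add, ← pow_add, hn, natCard_eq_pow_finrank (K := F), ← pow_mul, ← pow_two]
  refine (ncard_mul_le_ncard_mul _ hfactor hpair).trans ?_
  exact_mod_cast (Nat.mul_le_mul_right _ hT).trans_eq hV

lemma le_ncard_leftFactors_of_mem_independentPairs (hC : LinearMap.ker C = ⊥)
    (hC1 : LinearMap.ker (C - 1) = ⊥) (hn : a + b + g = finrank F V) (ha : 2 ≤ a) (hb : 2 ≤ b)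
    {x : Fin a → V} {y : Fin b → V} (hp : (x, y) ∈ independentPairs C a b) :
    (Nat.card V : ℝ) ^ g * (1 / 4) ^ 2 ≤
      {u ∈ leftFactors C a b | (x, y) ∈ kernelFrames C a b u}.ncard := by
  obtain ⟨hy, hxy, hxCy⟩ := hp
  have hx : LinearIndependent F x := .of_comp _ hxy
  have hyx : LinearIndependent F (Sum.elim y x) := linearIndependent_sumElim_of_mkQ_span hy hxy
  have hCyx : LinearIndependent F (Sum.elim (C ∘ y) x) :=
    linearIndependent_sumElim_of_mkQ_span (hy.map' C hC) hxCy
  obtain ⟨B, hB⟩ := exists_basis_sum_fin hyx (g := g)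
    (by simp only [Fintype.card_sum, Fintype.card_fin]; omega)
  set e : Fin g → V := fun i => B (Sum.inr i)
  let e' : ℕ → V := Function.extend Fin.val e 0
  have he' (i : Fin g) : e' i = e i := Fin.val_injective.extend_apply _ _ _
  refine (le_ncard_linearIndependent_mkQ_sub (span F (Set.range (Sum.elim (C ∘ y) x)))
    (span F (Set.range ((C - 1 : End F V) ∘ y))) (span F (Set.range ((1 - C : End F V) ∘ x)))
    e' (C ∘ e') ?_ ?_ ?_).trans (Nat.cast_le.2 ?_)
  · rw [finrank_span_eq_card hCyx]
    simp only [Fintype.card_sum, Fintype.card_fin]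
    omega
  · have := finrank_span_range_fin_le (F := F) ((C - 1 : End F V) ∘ y)
    omega
  · have := finrank_span_range_fin_le (F := F) ((1 - C : End F V) ∘ x)
    omega
  have : Finite (End F V) := DFunLike.finite _
  let U (f : Fin g → V) : End F V := B.constr F (Sum.elim (Sum.elim (C ∘ y) x) f)
  have hU (f : Fin g → V) (i) : U f (B i) = Sum.elim (Sum.elim (C ∘ y) x) f i :=
    B.constr_basis F _ i
  refine Set.ncard_le_ncard_of_injOn U (fun f hf => ?_) fun f _ f' _ hff' => ?_
  · have hUy (i : Fin b) : U f (y i) = C (y i) := by simpa [hB] using hU f (Sum.inl (Sum.inl i))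
    have hUx (i : Fin a) : U f (x i) = x i := by simpa [hB] using hU f (Sum.inl (Sum.inr i))
    have hUe (i : Fin g) : U f (e i) = f i := hU f (Sum.inr i)
    have hp : (x, y) ∈ kernelFrames C a b (U f) := mem_kernelFrames_iff.2 ⟨⟨hx, hUx⟩, hy, hUy⟩
    obtain ⟨hf, hf1, hfC⟩ := hf
    simp only [Function.comp_apply, he'] at hf1 hfC
    refine ⟨mem_leftFactors_of_linearIndependent_mkQ (e := e) hn hC1 hp hCyx ?_ ?_ ?_, hp⟩
    · simpa only [Function.comp_def, hUe] using hf
    · simpa only [Function.comp_def, LinearMap.sub_apply, End.one_apply, hUe] using hf1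
    · simpa only [Function.comp_def, LinearMap.sub_apply, hUe] using hfC
  · funext i
    rw [← show U f (e i) = f i from hU f (Sum.inr i), hff']
    exact hU f' (Sum.inr i)

lemma le_ncard_independentPairs (C : End F V) (hn : a + b ≤ finrank F V) :
    (Nat.card V : ℝ) ^ (a + b) * (1 / 4) ^ 4 ≤ (independentPairs C a b).ncard := by
  have hfiber : ∀ y ∈ {y : Fin b → V | LinearIndependent F y},
      (Nat.card V : ℝ) ^ a * (1 / 4) ^ 2 ≤ {p ∈ independentPairs C a b | p.2 = y}.ncard := by
    intro y hy
    have hspan := finrank_span_range_fin_le (F := F) y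
    have hspanC := finrank_span_range_fin_le (F := F) (C ∘ y)
    refine (le_ncard_linearIndependent_mkQ_inter (a := a) (span F (Set.range y))
      (span F (Set.range (C ∘ y))) (by omega) (by omega)).trans (Nat.cast_le.2 ?_)
    exact Set.ncard_le_ncard_of_injOn (·, y) (fun x hx => ⟨⟨hy, hx⟩, rfl⟩)
      (Prod.mk_left_injective y).injOn
  calc (Nat.card V : ℝ) ^ (a + b) * (1 / 4) ^ 4
      = (Nat.card V : ℝ) ^ b * (1 / 4) ^ 2 * (Nat.card V ^ a * (1 / 4) ^ 2) := by ring
    _ ≤ ({y : Fin b → V | LinearIndependent F y}.ncard : ℝ) * (Nat.card V ^ a * (1 / 4) ^ 2) := by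
        gcongr
        exact le_ncard_linearIndependent (by omega)
    _ ≤ _ := ncard_mul_le_ncard_of_le_fiber hfiber

theorem le_ncard_leftFactors_mul (hC : LinearMap.ker C = ⊥) (hC1 : LinearMap.ker (C - 1) = ⊥)
    (hn : a + b + g = finrank F V) (ha : 2 ≤ a) (hb : 2 ≤ b) :
    (Nat.card F : ℝ) ^ finrank F V ^ 2 * (1 / 4) ^ 6 ≤
      (leftFactors C a b).ncard * Nat.card F ^ (a ^ 2 + b ^ 2) := by
  have : Finite (End F V) := DFunLike.finite _
  have hV : (Nat.card V : ℝ) ^ (a + b + g) = Nat.card F ^ finrank F V ^ 2 := by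
    rw [hn, natCard_eq_pow_finrank (K := F), Nat.cast_pow, ← pow_mul, ← pow_two]
  calc (Nat.card F : ℝ) ^ finrank F V ^ 2 * (1 / 4) ^ 6
      = (Nat.card V : ℝ) ^ (a + b) * (1 / 4) ^ 4 * (Nat.card V ^ g * (1 / 4) ^ 2) := by
        rw [← hV]
        ring
    _ ≤ _ := by
        gcongr
        exact le_ncard_independentPairs C (by omega)
    _ ≤ (leftFactors C a b).ncard * Nat.card F ^ (a ^ 2 + b ^ 2) :=
        ncard_mul_le_ncard_mul (fun p u => p ∈ kernelFrames C a b u)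
          (fun p hp => le_ncard_leftFactors_of_mem_independentPairs hC hC1 hn ha hb hp)
          (fun u hu => ?_)
  exact (Nat.cast_le.2 ((Set.ncard_le_ncard fun p hp => hp.2).trans
    (ncard_kernelFrames_le hu))).trans_eq (by push_cast; rfl)

end LeftFactors

section Asymptotics

lemma pow_sq_mul_pow_sq_eq_rpow_mul {q : ℝ} (hq : 0 < q) {a b g n : ℕ} (hn : a + b + g = n) :
    q ^ n ^ 2 * q ^ g ^ 2 =
      q ^ ((((n + g) ^ 2 : ℕ) : ℝ) / 2) * q ^ (-((a : ℝ) - b) ^ 2 / 2) * q ^ (a ^ 2 + b ^ 2) := by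
  subst hn
  simp only [← Real.rpow_natCast q, ← Real.rpow_add hq]
  congr 1
  push_cast
  ring

lemma rpow_neg_half_sq_le {q : ℝ} (hq : 2 ≤ q) (m : ℕ) :
    q ^ (-((m : ℝ) + 2) ^ 2 / 2) ≤ (1 / 2) ^ (m + 2) := by
  calc q ^ (-((m : ℝ) + 2) ^ 2 / 2)
      ≤ q ^ (-((m + 2 : ℕ) : ℝ)) :=
        Real.rpow_le_rpow_of_exponent_le (by linarith) (by push_cast; nlinarith)
    _ = (1 / q) ^ (m + 2) := by
        rw [Real.rpow_neg (by linarith), Real.rpow_natCast, one_div, inv_pow]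
    _ ≤ (1 / 2) ^ (m + 2) := by gcongr

-- Passing from `m` to `m + 2` only adds the two end points `(0, m + 2)` and `(m + 2, 0)`.
lemma sum_antidiagonal_rpow_le {q : ℝ} (hq : 2 ≤ q) (m : ℕ) :
    ∑ p ∈ antidiagonal m, q ^ (-((p.1 : ℝ) - p.2) ^ 2 / 2) ≤ 3 - (1 / 2) ^ m := by
  induction m using Nat.twoStepInduction with
  | zero => norm_num
  | one =>
    calc ∑ p ∈ antidiagonal (1 : ℕ), q ^ (-((p.1 : ℝ) - p.2) ^ 2 / 2)
        = 2 * q ^ (-(1 / 2) : ℝ) := by norm_num [Finset.Nat.antidiagonal_succ, two_mul]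
      _ ≤ 2 * 1 := by
          gcongr
          exact Real.rpow_le_one_of_one_le_of_nonpos (by linarith) (by norm_num)
      _ ≤ 3 - (1 / 2) ^ 1 := by norm_num
  | more m ih _ =>
    have hend := rpow_neg_half_sq_le hq m
    rw [Finset.Nat.antidiagonal_succ_succ', Finset.sum_cons, Finset.sum_cons, Finset.sum_map]
    simp only [Function.Embedding.prodMap, Function.Embedding.coeFn_mk, Prod.map,
      Nat.cast_succ, Nat.cast_zero, add_sub_add_right_eq_sub, zero_sub, sub_zero, neg_sq,
      add_assoc, one_add_one_eq_two]
    rw [pow_add] at hend ⊢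
    have : (0 : ℝ) < (1 / 2) ^ m := by positivity
    linarith

variable {F V : Type*} [Field F] [Finite F] [AddCommGroup V] [Module F V] [Finite V]
  {C : End F V} {a b g : ℕ}

lemma ncard_leftFactors_le (hC1 : LinearMap.ker (C - 1) = ⊥) (hn : a + b + g = finrank F V) :
    ((leftFactors C a b).ncard : ℝ) ≤
      256 * (Nat.card F : ℝ) ^ ((((finrank F V + g) ^ 2 : ℕ) : ℝ) / 2) / Nat.card (GL (Fin g) F) *
        (Nat.card F : ℝ) ^ (-((a : ℝ) - b) ^ 2 / 2) := by
  have hq : (0 : ℝ) < Nat.card F := by exact_mod_cast Nat.card_pos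
  have hG : (0 : ℝ) < Nat.card (GL (Fin g) F) := by exact_mod_cast Nat.card_pos
  have hGle : (Nat.card (GL (Fin g) F) : ℝ) ≤ Nat.card F ^ g ^ 2 := by
    exact_mod_cast natCard_GL_le g
  have hcount := mul_le_mul (ncard_leftFactors_mul_le hC1 hn) hGle hG.le (by positivity)
  rw [pow_sq_mul_pow_sq_eq_rpow_mul hq hn] at hcount
  rw [div_mul_eq_mul_div, le_div_iff₀ hG]
  refine le_of_mul_le_mul_right ?_ (pow_pos hq (a ^ 2 + b ^ 2))
  linarith

lemma le_ncard_leftFactors (hC : LinearMap.ker C = ⊥) (hC1 : LinearMap.ker (C - 1) = ⊥)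
    (hn : a + b + g = finrank F V) (ha : 2 ≤ a) (hb : 2 ≤ b) :
    (1 / 4) ^ 8 * (Nat.card F : ℝ) ^ ((((finrank F V + g) ^ 2 : ℕ) : ℝ) / 2) /
        Nat.card (GL (Fin g) F) * (Nat.card F : ℝ) ^ (-((a : ℝ) - b) ^ 2 / 2) ≤
      (leftFactors C a b).ncard := by
  have hq : (0 : ℝ) < Nat.card F := by exact_mod_cast Nat.card_pos
  have hG : (0 : ℝ) < Nat.card (GL (Fin g) F) := by exact_mod_cast Nat.card_pos
  have hcount := mul_le_mul (le_ncard_leftFactors_mul hC hC1 hn ha hb) (le_natCard_GL (F := F) g)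
    (by positivity) (by positivity)
  rw [mul_mul_mul_comm, pow_sq_mul_pow_sq_eq_rpow_mul hq hn] at hcount
  rw [div_mul_eq_mul_div, div_le_iff₀ hG]
  refine le_of_mul_le_mul_right ?_ (pow_pos hq (a ^ 2 + b ^ 2))
  linarith

end Asymptotics

section Factorizations

variable {F : Type} [Field F] {n : ℕ}

lemma ker_toLin'_eq_bot (u : GL (Fin n) F) : LinearMap.ker (Matrix.toLin' u.val) = ⊥ :=
  (LinearMap.isUnit_iff_ker_eq_bot _).1 (Matrix.isUnit_toLin'_iff.2 u.isUnit)

lemma fixedDim_eq_finrank_ker_sub_one (u : GL (Fin n) F) :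
    fixedDim u = finrank F (LinearMap.ker (Matrix.toLin' u.val - 1)) := by
  rw [fixedDim, map_sub, Matrix.toLin'_one]
  rfl

lemma ker_toLin'_sub_one_eq_bot {c : GL (Fin n) F} (hc : fixedDim c = 0) :
    LinearMap.ker (Matrix.toLin' c.val - 1) = ⊥ := by
  rwa [fixedDim_eq_finrank_ker_sub_one, finrank_eq_zero] at hc

lemma fixedDim_eq_finrank_ker_sub_mul (u v : GL (Fin n) F) :
    fixedDim v =
      finrank F (LinearMap.ker (Matrix.toLin' u.val - Matrix.toLin' (u * v).val)) := by
  have hfactor : Matrix.toLin' u.val - Matrix.toLin' (u * v).val =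
      -(Matrix.toLin' u.val ∘ₗ Matrix.toLin' (v.val - 1)) := by
    rw [← Matrix.toLin'_mul, mul_sub, mul_one, map_sub, neg_sub, Units.val_mul]
  rw [fixedDim, hfactor, LinearMap.ker_neg,
    LinearMap.ker_comp_of_ker_eq_bot _ (ker_toLin'_eq_bot u)]

lemma fixedDim_eq_zero_of_irreducible_charpoly (hn : n ≠ 1) {c : GL (Fin n) F}
    (hc : Irreducible (Matrix.charpoly (c : Matrix (Fin n) (Fin n) F))) : fixedDim c = 0 := by
  rw [fixedDim_eq_finrank_ker_sub_one, finrank_eq_zero, eq_bot_iff]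
  intro v hv
  by_contra hv0
  have heigen : End.HasEigenvalue (Matrix.toLin' c.val) 1 :=
    End.hasEigenvalue_of_hasEigenvector ⟨by
      rwa [End.mem_eigenspace_iff, one_smul, ← sub_eq_zero], hv0⟩
  rw [End.hasEigenvalue_iff_isRoot_charpoly, Matrix.charpoly_toLin'] at heigen
  have hdegree := Polynomial.degree_eq_one_of_irreducible_of_root hc heigen
  rw [Matrix.charpoly_degree_eq_dim, Fintype.card_fin] at hdegree
  exact hn (by exact_mod_cast hdegree)

lemma ncard_factorizations_eq_ncard_leftFactors (c : GL (Fin n) F) (a b : ℕ) :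
    {p : GL (Fin n) F × GL (Fin n) F | p.1 * p.2 = c ∧ fixedDim p.1 = a ∧ fixedDim p.2 = b}.ncard =
      (leftFactors (Matrix.toLin' c.val) a b).ncard := by
  refine Set.BijOn.ncard_eq (f := fun p => Matrix.toLin' p.1.val) ⟨?_, ?_, ?_⟩
  · rintro ⟨u, v⟩ ⟨rfl, ha, hb⟩
    exact ⟨Matrix.isUnit_toLin'_iff.2 u.isUnit, by rw [← ha, fixedDim_eq_finrank_ker_sub_one],
      by rw [← hb, fixedDim_eq_finrank_ker_sub_mul u v]⟩
  · rintro ⟨u, v⟩ ⟨huv, -⟩ ⟨u', v'⟩ ⟨huv', -⟩ heq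
    obtain rfl : u = u' := Units.ext (Matrix.toLin'.injective heq)
    exact congrArg (u, ·) (mul_left_cancel (huv.trans huv'.symm))
  · rintro w ⟨hw, ha, hb⟩
    obtain ⟨A, rfl⟩ := Matrix.toLin'.surjective w
    obtain ⟨u, rfl⟩ := Matrix.isUnit_toLin'_iff.1 hw
    refine ⟨(u, u⁻¹ * c), ⟨mul_inv_cancel_left u c, ?_, ?_⟩, rfl⟩
    · rw [← ha, fixedDim_eq_finrank_ker_sub_one]
    · rw [← hb, fixedDim_eq_finrank_ker_sub_mul u, mul_inv_cancel_left]

variable [Finite F]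

lemma natCard_factorizations_eq_sum {m g : ℕ} (hm : m + g = n) (c : GL (Fin n) F) :
    Nat.card {p : GL (Fin n) F × GL (Fin n) F //
        p.1 * p.2 = c ∧ fixedDim p.1 + fixedDim p.2 + g = n} =
      ∑ k ∈ antidiagonal m, (leftFactors (Matrix.toLin' c.val) k.1 k.2).ncard := by
  have hmaps : Set.MapsTo (fun p : GL (Fin n) F × GL (Fin n) F => (fixedDim p.1, fixedDim p.2))
      {p | p.1 * p.2 = c ∧ fixedDim p.1 + fixedDim p.2 + g = n} (antidiagonal m) := by
    rintro p ⟨-, hp⟩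
    exact mem_antidiagonal.2 (by dsimp only; omega)
  rw [← Set.coe_ofPred, Nat.card_coe_set_eq, ncard_eq_sum_ncard_fiber hmaps]
  refine Finset.sum_congr rfl fun k hk => ?_
  rw [← ncard_factorizations_eq_ncard_leftFactors]
  congr 1
  ext p
  have := mem_antidiagonal.1 hk
  simp only [Set.mem_ofPred_eq, Prod.ext_iff]
  exact ⟨fun h => ⟨h.1.1, h.2⟩, fun h => ⟨⟨h.1, by omega⟩, h.2⟩⟩

lemma natCard_factorizations_le {m g : ℕ} (hm : m + g = n) {c : GL (Fin n) F}
    (hc : fixedDim c = 0) :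
    (Nat.card {p : GL (Fin n) F × GL (Fin n) F //
        p.1 * p.2 = c ∧ fixedDim p.1 + fixedDim p.2 + g = n} : ℝ) ≤
      768 * (Nat.card F : ℝ) ^ ((((n + g) ^ 2 : ℕ) : ℝ) / 2) / Nat.card (GL (Fin g) F) := by
  set E : ℝ := (Nat.card F : ℝ) ^ ((((n + g) ^ 2 : ℕ) : ℝ) / 2) with hE
  have hterm : ∀ k ∈ antidiagonal m,
      ((leftFactors (Matrix.toLin' c.val) k.1 k.2).ncard : ℝ) ≤
        256 * E / Nat.card (GL (Fin g) F) *
          (Nat.card F : ℝ) ^ (-((k.1 : ℝ) - k.2) ^ 2 / 2) := fun k hk => by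
    have hle := ncard_leftFactors_le (ker_toLin'_sub_one_eq_bot hc)
      (show k.1 + k.2 + g = finrank F (Fin n → F) by
        rw [mem_antidiagonal.1 hk, hm, finrank_fin_fun])
    rwa [finrank_fin_fun, ← hE] at hle
  rw [natCard_factorizations_eq_sum hm, Nat.cast_sum]
  calc _ ≤ 256 * E / Nat.card (GL (Fin g) F) *
          ∑ k ∈ antidiagonal m, (Nat.card F : ℝ) ^ (-((k.1 : ℝ) - k.2) ^ 2 / 2) :=
        (Finset.sum_le_sum hterm).trans_eq (Finset.mul_sum ..).symm
    _ ≤ 256 * E / Nat.card (GL (Fin g) F) * 3 := by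
        gcongr
        exact (sum_antidiagonal_rpow_le (two_le_natCard_field F) m).trans
          (sub_le_self _ (by positivity))
    _ = 768 * E / Nat.card (GL (Fin g) F) := by ring

lemma le_natCard_factorizations {m g : ℕ} (hm : m + g = n) (hm_four : 4 ≤ m) {c : GL (Fin n) F}
    (hc : fixedDim c = 0) :
    (1 / 4) ^ 8 * (Nat.card F : ℝ) ^ (-1 / 2 : ℝ) *
        (Nat.card F : ℝ) ^ ((((n + g) ^ 2 : ℕ) : ℝ) / 2) / Nat.card (GL (Fin g) F) ≤
      (Nat.card {p : GL (Fin n) F × GL (Fin n) F //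
        p.1 * p.2 = c ∧ fixedDim p.1 + fixedDim p.2 + g = n} : ℝ) := by
  set E : ℝ := (Nat.card F : ℝ) ^ ((((n + g) ^ 2 : ℕ) : ℝ) / 2) with hE
  obtain ⟨a, b, hab, hbalanced, ha, hb⟩ :
      ∃ a b : ℕ, a + b = m ∧ (b = a ∨ b = a + 1) ∧ 2 ≤ a ∧ 2 ≤ b :=
    ⟨m / 2, m - m / 2, by omega, by omega, by omega, by omega⟩
  have hdiff : ((a : ℝ) - b) ^ 2 ≤ 1 := by
    rcases hbalanced with rfl | rfl <;> simp
  have hle := le_ncard_leftFactors (ker_toLin'_eq_bot c) (ker_toLin'_sub_one_eq_bot hc)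
    (show a + b + g = finrank F (Fin n → F) by rw [hab, hm, finrank_fin_fun]) ha hb
  rw [finrank_fin_fun, ← hE] at hle
  rw [natCard_factorizations_eq_sum hm]
  calc (1 / 4) ^ 8 * (Nat.card F : ℝ) ^ (-1 / 2 : ℝ) * E / Nat.card (GL (Fin g) F)
      = (1 / 4) ^ 8 * E / Nat.card (GL (Fin g) F) * (Nat.card F : ℝ) ^ (-1 / 2 : ℝ) := by ring
    _ ≤ (1 / 4) ^ 8 * E / Nat.card (GL (Fin g) F) *
          (Nat.card F : ℝ) ^ (-((a : ℝ) - b) ^ 2 / 2) := by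
        gcongr
        linarith [two_le_natCard_field F]
    _ ≤ _ := hle.trans (Nat.cast_le.2 (Finset.single_le_sum_of_canonicallyOrdered
        (f := fun k : ℕ × ℕ => (leftFactors (Matrix.toLin' c.val) k.1 k.2).ncard)
        (mem_antidiagonal.2 hab : (a, b) ∈ antidiagonal m)))

end Factorizations

end GenusFactorization

theorem genus_g_factorization_asymptotics_general {F : Type} [Field F] [Finite F] {g n : ℕ}
    (hn : g + 4 ≤ n) {c : GL (Fin n) F} (hc : fixedDim c = 0) :
    (1 / 4) ^ 8 * (Nat.card F : ℝ) ^ (-1 / 2 : ℝ) *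
          (Nat.card F : ℝ) ^ ((((n + g) ^ 2 : ℕ) : ℝ) / 2) / Nat.card (GL (Fin g) F) ≤
        (Nat.card {p : GL (Fin n) F × GL (Fin n) F //
          p.1 * p.2 = c ∧ fixedDim p.1 + fixedDim p.2 + g = n} : ℝ) ∧
      (Nat.card {p : GL (Fin n) F × GL (Fin n) F //
          p.1 * p.2 = c ∧ fixedDim p.1 + fixedDim p.2 + g = n} : ℝ) ≤
        768 * (Nat.card F : ℝ) ^ ((((n + g) ^ 2 : ℕ) : ℝ) / 2) / Nat.card (GL (Fin g) F) :=
  have hm : n - g + g = n := by omega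
  ⟨GenusFactorization.le_natCard_factorizations hm (by omega) hc,
    GenusFactorization.natCard_factorizations_le hm hc⟩

/-- Theorem 5.1: for fixed `q` and genus `g`, the number of genus-`g` factorizations of a
regular elliptic element of `GL_n(F_q)` into two factors grows like
`Θ(q^{(n+g)²/2} / |GL_g(F_q)|)` as `n → ∞`, with implicit constants depending only on `q`. -/
theorem genus_g_factorization_asymptotics
    (F : Type) [Field F] [Fintype F] :
    ∃ C₁ C₂ : ℝ, 0 < C₁ ∧ 0 < C₂ ∧
      ∀ g : ℕ, ∃ N : ℕ, ∀ n : ℕ, N ≤ n →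
        ∀ c : GL (Fin n) F,
          Irreducible (Matrix.charpoly (c : Matrix (Fin n) (Fin n) F)) →
            C₁ * (Fintype.card F : ℝ) ^ ((((n + g) ^ 2 : ℕ) : ℝ) / 2) /
                (Nat.card (GL (Fin g) F) : ℝ)
              ≤ (Nat.card {p : GL (Fin n) F × GL (Fin n) F //
                  p.1 * p.2 = c ∧ fixedDim p.1 + fixedDim p.2 + g = n} : ℝ) ∧
            (Nat.card {p : GL (Fin n) F × GL (Fin n) F //
                p.1 * p.2 = c ∧ fixedDim p.1 + fixedDim p.2 + g = n} : ℝ)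
              ≤ C₂ * (Fintype.card F : ℝ) ^ ((((n + g) ^ 2 : ℕ) : ℝ) / 2) /
                  (Nat.card (GL (Fin g) F) : ℝ) := by
  refine ⟨(1 / 4) ^ 8 * (Nat.card F : ℝ) ^ (-1 / 2 : ℝ), 768,
    mul_pos (by positivity) (Real.rpow_pos_of_pos (Nat.cast_pos.2 Nat.card_pos) _), by norm_num,
    fun g => ⟨g + 4, fun n hn c hc => ?_⟩⟩
  rw [← Nat.card_eq_fintype_card]
  exact genus_g_factorization_asymptotics_general hn
    (GenusFactorization.fixedDim_eq_zero_of_irreducible_charpoly (by omega) hc)
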